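/- Let C be a regular category and let X be an object with global support which admits pushouts of any two of its product projections (for any two product projections p, q of X, a pushout of p along q exists). Then X has the finite strict refinement property if and only if X is projection-coextensive. -/

import Mathlib

open CategoryTheory CategoryTheory.Limits

universe v u

variable {C : Type u} [Category.{v} C]

/-- `(p, q)` is a binary product diagram, exhibiting `X` as the product of `A` and `B`. -/
def IsBinaryProduct {X A B : C} (p : X ⟶ A) (q : X ⟶ B) : Prop :=
  Nonempty (IsLimit (BinaryFan.mk p q))

/-- `p : X ⟶ A` is a product projection. -/
def IsProductProjection {X A : C} (p : X ⟶ A) : Prop :=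
  ∃ (B : C) (q : X ⟶ B), IsBinaryProduct p q

/-- A pushout square whose two legs belong to the class `M`. -/
def IsMPushout (M : MorphismProperty C) {Z A B P : C}
    (f : Z ⟶ A) (g : Z ⟶ B) (a : A ⟶ P) (b : B ⟶ P) : Prop :=
  IsPushout f g a b ∧ M a ∧ M b

/-- `X` is an `M`-coextensive object. -/
structure MCoextensive (M : MorphismProperty C) (X : C) : Prop where
  pushout_exists : ∀ ⦃Y A : C⦄ (m : X ⟶ Y) (p : X ⟶ A), M m → IsProductProjection p →
    ∃ (P : C) (a : A ⟶ P) (b : Y ⟶ P), IsMPushout M p m a b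
  isBinaryProduct_iff : ∀ ⦃A₁ A₂ Y B₁ B₂ : C⦄ (π₁ : X ⟶ A₁) (π₂ : X ⟶ A₂)
    (f : X ⟶ Y) (p₁ : A₁ ⟶ B₁) (p₂ : A₂ ⟶ B₂) (π₁' : Y ⟶ B₁) (π₂' : Y ⟶ B₂),
    IsBinaryProduct π₁ π₂ → M f → M p₁ → M p₂ →
    π₁ ≫ p₁ = f ≫ π₁' → π₂ ≫ p₂ = f ≫ π₂' →
    (IsBinaryProduct π₁' π₂' ↔ (IsMPushout M π₁ f p₁ π₁' ∧ IsMPushout M π₂ f p₂ π₂'))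

/-- The class of product projections. -/
def projections (C : Type u) [Category.{v} C] : MorphismProperty C :=
  fun _ _ f => IsProductProjection f

/-- `X` is projection-coextensive. -/
def ProjectionCoextensive (X : C) : Prop := MCoextensive (projections C) X

/-- `f` is a regular epimorphism (a coequalizer of some parallel pair). -/
def IsRegularEpimorphism {X Y : C} (f : X ⟶ Y) : Prop :=
  ∃ (W : C) (a b : W ⟶ X) (h : a ≫ f = b ≫ f), Nonempty (IsColimit (Cofork.ofπ f h))

/-- The class of regular epimorphisms. -/
def regularEpis (C : Type u) [Category.{v} C] : MorphismProperty C :=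
  fun _ _ f => IsRegularEpimorphism f

/-- `X` is regularly-coextensive. -/
def RegularlyCoextensive (X : C) : Prop := MCoextensive (regularEpis C) X

/-- A regular category: finitely complete, coequalizers of kernel pairs, and
regular epimorphisms are stable under pullback. -/
class IsRegularCategory (C : Type u) [Category.{v} C] [HasFiniteLimits C] : Prop where
  hasCoequalizer_kernelPair : ∀ {X Y : C} (f : X ⟶ Y),
    HasCoequalizer (pullback.fst f f) (pullback.snd f f)
  regularEpi_stable : ∀ {X Y Z : C} (f : X ⟶ Y) (g : Z ⟶ Y),
    IsRegularEpimorphism f → IsRegularEpimorphism (pullback.snd f g)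

/-- `X` has global support: the unique morphism to the terminal object is a regular epi. -/
def HasGlobalSupport [HasTerminal C] (X : C) : Prop :=
  IsRegularEpimorphism (terminal.from X)

/-- `X` has the finite strict refinement property. -/
def HasFiniteStrictRefinement {C : Type u} [Category.{v} C] (X : C) : Prop :=
  ∀ (I J : Type) (_ : Finite I) (_ : Finite J) (A : I → C) (B : J → C)
    (f : ∀ i, X ⟶ A i) (g : ∀ j, X ⟶ B j),
    Nonempty (IsLimit (Fan.mk X f)) → Nonempty (IsLimit (Fan.mk X g)) →
    ∃ (D : I → J → C) (α : ∀ i j, A i ⟶ D i j) (β : ∀ i j, B j ⟶ D i j),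
      (∀ i j, f i ≫ α i j = g j ≫ β i j) ∧
      (∀ i, Nonempty (IsLimit (Fan.mk (A i) (fun j => α i j)))) ∧
      (∀ j, Nonempty (IsLimit (Fan.mk (B j) (fun i => β i j))))

section Helpers

theorem isBP_iff {X A B : C} (p : X ⟶ A) (q : X ⟶ B) : IsBinaryProduct p q ↔
    (∀ (T : C) (a : T ⟶ A) (b : T ⟶ B), ∃ l : T ⟶ X, l ≫ p = a ∧ l ≫ q = b) ∧
    (∀ (T : C) (l m : T ⟶ X), l ≫ p = m ≫ p → l ≫ q = m ≫ q → l = m) := by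
  constructor
  · rintro ⟨h⟩
    refine ⟨fun T a b => ?_, fun T l m h1 h2 => BinaryFan.IsLimit.hom_ext h h1 h2⟩
    obtain ⟨l, h1, h2⟩ := BinaryFan.IsLimit.lift' h a b
    exact ⟨l, h1, h2⟩
  · rintro ⟨h1, h2⟩
    choose l hl hr using h1
    exact ⟨BinaryFan.isLimitMk (fun s => l _ s.fst s.snd) (fun s => hl _ _ _)
      (fun s => hr _ _ _)
      (fun s m e1 e2 => h2 _ _ _ (e1.trans (hl _ _ _).symm) (e2.trans (hr _ _ _).symm))⟩

theorem isFP_iff {I : Type} {X : C} {A : I → C} (f : ∀ i, X ⟶ A i) :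
    Nonempty (IsLimit (Fan.mk X f)) ↔
    (∀ (T : C) (a : ∀ i, T ⟶ A i), ∃ l : T ⟶ X, ∀ i, l ≫ f i = a i) ∧
    (∀ (T : C) (l m : T ⟶ X), (∀ i, l ≫ f i = m ≫ f i) → l = m) := by
  constructor
  · rintro ⟨h⟩
    refine ⟨fun T a => ⟨Fan.IsLimit.lift h a, fun i => Fan.IsLimit.fac h a i⟩,
      fun T l m h1 => Fan.IsLimit.hom_ext h _ _ h1⟩
  · rintro ⟨h1, h2⟩
    choose l hl using h1
    exact ⟨Fan.IsLimit.mk _ (fun s => l _ s.proj) (fun s j => hl _ _ _)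
      (fun s m e => h2 _ _ _ (fun i => (e i).trans (hl _ _ _).symm))⟩

theorem IsBinaryProduct.symm' {X A B : C} {p : X ⟶ A} {q : X ⟶ B} (h : IsBinaryProduct p q) :
    IsBinaryProduct q p := by
  rw [isBP_iff] at h ⊢
  refine ⟨fun T a b => ?_, fun T l m h1 h2 => h.2 T l m h2 h1⟩
  obtain ⟨l, h1, h2⟩ := h.1 T b a
  exact ⟨l, h2, h1⟩

theorem isProductProjection_iso [HasFiniteLimits C] {X A : C} (p : X ⟶ A) [IsIso p] :
    IsProductProjection p := by
  refine ⟨⊤_ C, terminal.from X, ?_⟩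
  rw [isBP_iff]
  refine ⟨fun T a b => ⟨a ≫ inv p, by simp, Subsingleton.elim _ _⟩, fun T l m h1 _ => ?_⟩
  exact (cancel_mono p).1 h1

theorem isProductProjection_comp [HasFiniteLimits C] {X A D : C} {p : X ⟶ A} {q : A ⟶ D}
    (hp : IsProductProjection p) (hq : IsProductProjection q) :
    IsProductProjection (p ≫ q) := by
  obtain ⟨B, p', hp⟩ := hp
  obtain ⟨E, q', hq⟩ := hq
  refine ⟨E ⨯ B, prod.lift (p ≫ q') p', ?_⟩
  rw [isBP_iff] at hp hq ⊢
  constructor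
  · intro T a b
    obtain ⟨l, h1, h2⟩ := hq.1 T a (b ≫ prod.fst)
    obtain ⟨m, h3, h4⟩ := hp.1 T l (b ≫ prod.snd)
    refine ⟨m, by rw [← Category.assoc, h3, h1], ?_⟩
    ext
    · rw [Category.assoc, prod.lift_fst, ← Category.assoc, h3, h2]
    · rw [Category.assoc, prod.lift_snd, h4]
  · intro T l m h1 h2
    have e1 := congrArg (· ≫ prod.fst) h2
    have e2 := congrArg (· ≫ prod.snd) h2
    simp only [Category.assoc, prod.lift_fst, prod.lift_snd] at e1 e2
    refine hp.2 _ _ _ (hq.2 _ _ _ ?_ ?_) e2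
    · simpa using h1
    · simpa using e1

theorem IsRegularEpimorphism.epi' {X Y : C} {f : X ⟶ Y} (h : IsRegularEpimorphism f) : Epi f := by
  obtain ⟨W, a, b, h, ⟨hc⟩⟩ := h
  exact ⟨fun u v huv => Cofork.IsColimit.hom_ext hc huv⟩

theorem IsRegularEpimorphism.desc' {X Y : C} {f : X ⟶ Y} (h : IsRegularEpimorphism f) :
    ∃ (W : C) (a b : W ⟶ X), a ≫ f = b ≫ f ∧ ∀ (Z : C) (u : X ⟶ Z), a ≫ u = b ≫ u →
      ∃ d : Y ⟶ Z, f ≫ d = u := by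
  obtain ⟨W, a, b, h, ⟨hc⟩⟩ := h
  exact ⟨W, a, b, h, fun Z u hu => ⟨Cofork.IsColimit.desc hc u hu, Cofork.IsColimit.π_desc' hc u hu⟩⟩

variable [HasFiniteLimits C] [IsRegularCategory C]

theorem regEpi_cancel {X Y Z : C} (s : X ⟶ Y) (p : Y ⟶ Z) (h : IsRegularEpimorphism (s ≫ p)) :
    IsRegularEpimorphism p := by
  have hep : Epi p := by
    have := h.epi'
    exact epi_of_epi s p
  refine ⟨pullback p p, pullback.fst p p, pullback.snd p p, pullback.condition, ?_⟩
  have hst : Epi (pullback.snd (s ≫ p) p) := (IsRegularCategory.regularEpi_stable _ p h).epi'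
  obtain ⟨W, a, b, hab, hd⟩ := h.desc'
  have key : ∀ (T : C) (u : Y ⟶ T), pullback.fst p p ≫ u = pullback.snd p p ≫ u →
      ∃ d : Z ⟶ T, p ≫ d = u := by
    intro T u hu
    have hk : ∀ (V : C) (x y : V ⟶ Y), x ≫ p = y ≫ p → x ≫ u = y ≫ u := by
      intro V x y hxy
      have := congrArg (pullback.lift x y hxy ≫ ·) hu
      simpa only [pullback.lift_fst_assoc, pullback.lift_snd_assoc] using this
    obtain ⟨d, hd⟩ := hd T (s ≫ u) (by
      have := hk W (a ≫ s) (b ≫ s) (by simpa using hab)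
      simpa using this)
    refine ⟨d, ?_⟩
    rw [← cancel_epi (pullback.snd (s ≫ p) p)]
    have e1 : pullback.fst (s ≫ p) p ≫ s ≫ p = pullback.snd (s ≫ p) p ≫ p := pullback.condition
    have e2 := hk _ (pullback.fst (s ≫ p) p ≫ s) (pullback.snd (s ≫ p) p) (by simpa using e1)
    rw [← Category.assoc, ← e1, ← e2]
    simp only [Category.assoc] at hd ⊢
    rw [hd]
  choose d hd using key
  exact ⟨Cofork.IsColimit.mk _ (fun t => d _ t.π t.condition) (fun t => hd _ _ _)
    (fun t m hm => by
      rw [← cancel_epi p]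
      exact hm.trans (hd _ _ _).symm)⟩

theorem gs_of_map {X B : C} (hX : HasGlobalSupport X) (t : X ⟶ B) : HasGlobalSupport B := by
  refine regEpi_cancel t _ ?_
  have : t ≫ terminal.from B = terminal.from X := Subsingleton.elim _ _
  rw [this]
  exact hX

theorem proj_regEpi {X A : C} (hX : HasGlobalSupport X) {p : X ⟶ A} (hp : IsProductProjection p) :
    IsRegularEpimorphism p := by
  obtain ⟨B, q, h⟩ := hp
  have hB := gs_of_map hX q
  have hr := IsRegularCategory.regularEpi_stable (terminal.from B) (terminal.from A) hB
  rw [isBP_iff] at h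
  obtain ⟨l, h1, h2⟩ := h.1 _ (pullback.snd (terminal.from B) (terminal.from A))
    (pullback.fst (terminal.from B) (terminal.from A))
  refine regEpi_cancel l p ?_
  rw [h1]
  exact hr

/-- The key pushout lemma. -/
theorem push_lemma {X A A' Y D F : C} (hX : HasGlobalSupport X) {p : X ⟶ A} {p' : X ⟶ A'}
    {f : X ⟶ Y} {a : A ⟶ D} {b : Y ⟶ D} {c : Y ⟶ F} {c' : A' ⟶ F}
    (hp : IsBinaryProduct p p') (hbc : IsBinaryProduct b c)
    (h1 : p ≫ a = f ≫ b) (h2 : p' ≫ c' = f ≫ c)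
    (ha : IsRegularEpimorphism a) (hf : Epi f) : IsPushout p f a b := by
  have hea : Epi a := ha.epi'
  obtain ⟨V, g1, g2, hg, hd⟩ := ha.desc'
  have hW : Epi (pullback.snd (terminal.from X) (terminal.from V)) :=
    (IsRegularCategory.regularEpi_stable (terminal.from X) (terminal.from V) hX).epi'
  rw [isBP_iff] at hp hbc
  have key : ∀ (Z : C) (u : A ⟶ Z) (v : Y ⟶ Z), p ≫ u = f ≫ v → ∃ d : D ⟶ Z,
      a ≫ d = u ∧ b ≫ d = v := by
    intro Z u v huv
    have hgu : g1 ≫ u = g2 ≫ u := by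
      rw [← cancel_epi (pullback.snd (terminal.from X) (terminal.from V))]
      obtain ⟨x1, e1, e1'⟩ := hp.1 _ (pullback.snd (terminal.from X) (terminal.from V) ≫ g1)
        (pullback.fst (terminal.from X) (terminal.from V) ≫ p')
      obtain ⟨x2, e2, e2'⟩ := hp.1 _ (pullback.snd (terminal.from X) (terminal.from V) ≫ g2)
        (pullback.fst (terminal.from X) (terminal.from V) ≫ p')
      have hx : x1 ≫ f = x2 ≫ f := by
        apply hbc.2
        · rw [Category.assoc, Category.assoc, ← h1, ← Category.assoc, ← Category.assoc, e1, e2,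
            Category.assoc, Category.assoc, hg]
        · rw [Category.assoc, Category.assoc, ← h2, ← Category.assoc, ← Category.assoc, e1', e2']
      rw [← Category.assoc, ← Category.assoc, ← e1, ← e2, Category.assoc, Category.assoc, huv,
        ← Category.assoc, ← Category.assoc, hx]
    obtain ⟨d, hd⟩ := hd Z u hgu
    refine ⟨d, hd, ?_⟩
    rw [← cancel_epi f, ← Category.assoc, ← h1, Category.assoc, hd, huv]
  choose d hd1 hd2 using key
  exact ⟨⟨h1⟩, ⟨PushoutCocone.IsColimit.mk h1 (fun s => d _ s.inl s.inr s.condition)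
    (fun s => hd1 _ _ _ _) (fun s => hd2 _ _ _ _)
    (fun s m e1 e2 => by
      rw [← cancel_epi a]
      exact e1.trans (hd1 _ _ _ _).symm)⟩⟩

theorem fan_bool_iff {X : C} {A : Bool → C} (f : ∀ i, X ⟶ A i) :
    Nonempty (IsLimit (Fan.mk X f)) ↔ IsBinaryProduct (f true) (f false) := by
  rw [isFP_iff, isBP_iff]
  constructor
  · rintro ⟨h1, h2⟩
    constructor
    · intro T a b
      obtain ⟨l, hl⟩ := h1 T (fun i => match i with | true => a | false => b)
      exact ⟨l, hl true, hl false⟩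
    · intro T l m e1 e2
      exact h2 T l m (fun i => by cases i <;> assumption)
  · rintro ⟨h1, h2⟩
    constructor
    · intro T a
      obtain ⟨l, hl, hl'⟩ := h1 T (a true) (a false)
      exact ⟨l, fun i => by cases i <;> assumption⟩
    · intro T l m e
      exact h2 T l m (e true) (e false)

/-- Binary consequence of strict refinement. -/
theorem refine_two {X A A' Y Y' : C} (hX : HasGlobalSupport X) (h : HasFiniteStrictRefinement X)
    {p : X ⟶ A} {p' : X ⟶ A'} {f : X ⟶ Y} {f' : X ⟶ Y'}
    (hp : IsBinaryProduct p p') (hf : IsBinaryProduct f f') :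
    ∃ (D D' : C) (a : A ⟶ D) (b : Y ⟶ D) (a' : A' ⟶ D') (b' : Y ⟶ D'),
      IsPushout p f a b ∧ IsPushout p' f a' b' ∧ IsBinaryProduct b b' ∧
      IsProductProjection a ∧ IsProductProjection a' := by
  obtain ⟨D, α, β, hc, hα, hβ⟩ := h Bool Bool inferInstance inferInstance
    (fun i => match i with | true => A | false => A')
    (fun i => match i with | true => Y | false => Y')
    (fun i => match i with | true => p | false => p')
    (fun i => match i with | true => f | false => f')
    ((fan_bool_iff _).2 hp) ((fan_bool_iff _).2 hf)
  have hY := (fan_bool_iff _).1 (hβ true)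
  have hA := (fan_bool_iff _).1 (hα true)
  have hA' := (fan_bool_iff _).1 (hα false)
  have hef : Epi f := (proj_regEpi hX ⟨_, _, hf⟩).epi'
  have e1 : IsProductProjection (α true true) := ⟨_, _, hA⟩
  have e2 : IsProductProjection (α false true) := ⟨_, _, hA'⟩
  refine ⟨D true true, D false true, α true true, β true true, α false true, β false true,
    ?_, ?_, hY, e1, e2⟩
  · exact push_lemma hX hp hY (hc true true) (hc false true)
      (proj_regEpi (gs_of_map hX p) e1) hef
  · exact push_lemma hX hp.symm' hY.symm' (hc false true) (hc true true)
      (proj_regEpi (gs_of_map hX p') e2) hef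

theorem binaryProduct_iso {Y D D' B B' : C} {b : Y ⟶ D} {b' : Y ⟶ D'} (h : IsBinaryProduct b b')
    (e : D ≅ B) (e' : D' ≅ B') {c : Y ⟶ B} {c' : Y ⟶ B'} (hc : b ≫ e.hom = c)
    (hc' : b' ≫ e'.hom = c') : IsBinaryProduct c c' := by
  subst hc hc'
  rw [isBP_iff] at h ⊢
  constructor
  · intro T x y
    obtain ⟨l, h1, h2⟩ := h.1 T (x ≫ e.inv) (y ≫ e'.inv)
    exact ⟨l, by rw [← Category.assoc, h1]; simp, by rw [← Category.assoc, h2]; simp⟩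
  · intro T l m h1 h2
    refine h.2 T l m ?_ ?_
    · rw [← cancel_mono e.hom]; simpa using h1
    · rw [← cancel_mono e'.hom]; simpa using h2

theorem pc_of_fsr {X : C} (hX : HasGlobalSupport X) (h : HasFiniteStrictRefinement X) :
    ProjectionCoextensive X where
  pushout_exists := by
    rintro Y A f p ⟨Y', f', hf⟩ ⟨A', p', hp⟩
    obtain ⟨D, D', a, b, a', b', h1, h2, h3, h4, h5⟩ := refine_two hX h hp hf
    exact ⟨D, a, b, h1, h4, ⟨_, _, h3⟩⟩
  isBinaryProduct_iff := by
    intro A₁ A₂ Y B₁ B₂ π₁ π₂ f p₁ p₂ π₁' π₂' hπ hf hp₁ hp₂ e₁ e₂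
    have hef : Epi f := (proj_regEpi hX hf).epi'
    constructor
    · intro hb
      exact ⟨⟨push_lemma hX hπ hb e₁ e₂ (proj_regEpi (gs_of_map hX π₁) hp₁) hef, hp₁, ⟨_, _, hb⟩⟩,
        ⟨push_lemma hX hπ.symm' hb.symm' e₂ e₁ (proj_regEpi (gs_of_map hX π₂) hp₂) hef, hp₂,
          ⟨_, _, hb.symm'⟩⟩⟩
    · rintro ⟨⟨hP, -, -⟩, ⟨hP', -, -⟩⟩
      obtain ⟨Y', f', hf⟩ := hf
      obtain ⟨D, D', a, b, a', b', h1, h2, h3, h4, h5⟩ := refine_two hX h hπ hf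
      exact binaryProduct_iso h3 (h1.isoIsPushout _ _ hP) (h2.isoIsPushout _ _ hP')
        (by simp) (by simp)

/-! ### The converse -/

theorem legs_proj {X Y A P : C} (h : ProjectionCoextensive X) {p : X ⟶ A} {m : X ⟶ Y}
    {a : A ⟶ P} {b : Y ⟶ P} (hp : IsProductProjection p) (hm : IsProductProjection m)
    (hP : IsPushout p m a b) : IsProductProjection a ∧ IsProductProjection b := by
  obtain ⟨Q, a', b', hQ, ha, hb⟩ := h.pushout_exists m p hm hp
  have e1 : a' ≫ (hQ.isoIsPushout _ _ hP).hom = a := by simp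
  have e2 : b' ≫ (hQ.isoIsPushout _ _ hP).hom = b := by simp
  exact ⟨e1 ▸ isProductProjection_comp ha (isProductProjection_iso _),
    e2 ▸ isProductProjection_comp hb (isProductProjection_iso _)⟩

theorem pushout_epi {C : Type u} [Category.{v} C] {X A Y B P : C} (e : X ⟶ A) [Epi e]
    {p : A ⟶ B} {m : A ⟶ Y} {a : B ⟶ P} {b : Y ⟶ P} :
    IsPushout (e ≫ p) (e ≫ m) a b ↔ IsPushout p m a b := by
  constructor
  · intro h
    have w : p ≫ a = m ≫ b := by
      rw [← cancel_epi e]; simpa using h.w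
    exact ⟨⟨w⟩, ⟨PushoutCocone.IsColimit.mk w
      (fun s => h.desc s.inl s.inr (by simp [s.condition]))
      (fun s => by simp) (fun s => by simp)
      (fun s m' e1 e2 => h.hom_ext (by simp [e1]) (by simp [e2]))⟩⟩
  · intro h
    have w : (e ≫ p) ≫ a = (e ≫ m) ≫ b := by simp [h.w]
    exact ⟨⟨w⟩, ⟨PushoutCocone.IsColimit.mk w
      (fun s => h.desc s.inl s.inr (by
        rw [← cancel_epi e]; simpa using s.condition))
      (fun s => by simp) (fun s => by simp)
      (fun s m' e1 e2 => h.hom_ext (by simp [e1]) (by simp [e2]))⟩⟩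

theorem bin_factor {X A A₁ A₂ Y P₁ P₂ : C} (hX : HasGlobalSupport X) (h : ProjectionCoextensive X)
    {e : X ⟶ A} (he : IsProductProjection e) {f₁ : A ⟶ A₁} {f₂ : A ⟶ A₂}
    (hf : IsBinaryProduct f₁ f₂) {m : A ⟶ Y} (hm : IsProductProjection m)
    {a₁ : A₁ ⟶ P₁} {a₂ : A₂ ⟶ P₂} {b₁ : Y ⟶ P₁} {b₂ : Y ⟶ P₂}
    (h₁ : IsPushout f₁ m a₁ b₁) (h₂ : IsPushout f₂ m a₂ b₂) : IsBinaryProduct b₁ b₂ := by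
  have hee : Epi e := (proj_regEpi hX he).epi'
  have hem : IsProductProjection (e ≫ m) := isProductProjection_comp he hm
  have hef₂ : IsProductProjection (e ≫ f₂) := isProductProjection_comp he ⟨_, _, hf.symm'⟩
  obtain ⟨K, k, hk⟩ := id he
  have hn : IsBinaryProduct (prod.lift k (e ≫ f₁)) (e ≫ f₂) := by
    rw [isBP_iff] at hk hf ⊢
    constructor
    · intro T x y
      obtain ⟨l, e1, e2⟩ := hf.1 T (x ≫ prod.snd) y
      obtain ⟨l', e3, e4⟩ := hk.1 T l (x ≫ prod.fst)
      refine ⟨l', ?_, by rw [← Category.assoc, e3, e2]⟩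
      ext
      · rw [Category.assoc, prod.lift_fst, e4]
      · rw [Category.assoc, prod.lift_snd, ← Category.assoc, e3, e1]
    · intro T l l' e1 e2
      have d1 := congrArg (· ≫ prod.fst) e1
      have d2 := congrArg (· ≫ prod.snd) e1
      simp only [Category.assoc, prod.lift_fst, prod.lift_snd] at d1 d2
      exact hk.2 _ _ _ (hf.2 _ _ _ (by simpa using d2) (by simpa using e2)) d1
  have hsnd : IsProductProjection (prod.snd : K ⨯ A₁ ⟶ A₁) :=
    ⟨_, prod.fst, IsBinaryProduct.symm' ⟨prodIsProd K A₁⟩⟩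
  have hpo : IsPushout (prod.lift k (e ≫ f₁)) e prod.snd f₁ :=
    ((h.isBinaryProduct_iff _ _ e prod.snd (𝟙 A₂) f₁ f₂ hn he hsnd (isProductProjection_iso _)
      (prod.lift_snd _ _) (Category.comp_id _)).1 hf).1.1
  have hpo1 : IsPushout (prod.lift k (e ≫ f₁)) (e ≫ m) (prod.snd ≫ a₁) b₁ := hpo.paste_vert h₁
  have hpo2 : IsPushout (e ≫ f₂) (e ≫ m) a₂ b₂ := (pushout_epi e).2 h₂
  have l1 := legs_proj h ⟨_, _, hn⟩ hem hpo1
  have l2 := legs_proj h hef₂ hem hpo2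
  exact (h.isBinaryProduct_iff _ _ (e ≫ m) _ _ b₁ b₂ hn hem l1.1 l2.1 hpo1.w hpo2.w).2
    ⟨⟨hpo1, l1⟩, ⟨hpo2, l2⟩⟩

theorem nary {X : C} (hX : HasGlobalSupport X) (h : ProjectionCoextensive X) (I : Type)
    [Finite I] : ∀ (A' Y : C) (e : X ⟶ A') (m : A' ⟶ Y) (A P : I → C) (f : ∀ i, A' ⟶ A i)
      (a : ∀ i, A i ⟶ P i) (b : ∀ i, Y ⟶ P i), IsProductProjection e → IsProductProjection m →
      Nonempty (IsLimit (Fan.mk A' f)) → (∀ i, IsPushout (f i) m (a i) (b i)) →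
      Nonempty (IsLimit (Fan.mk Y b)) := by
  induction I using Finite.induction_empty_option with
  | @of_equiv I J σ ih =>
    intro A' Y e m A P f a b he hm hf hpo
    have := ih A' Y e m (fun i => A (σ i)) (fun i => P (σ i)) (fun i => f (σ i))
      (fun i => a (σ i)) (fun i => b (σ i)) he hm ?_ (fun i => hpo _)
    · rw [isFP_iff] at this ⊢
      constructor
      · intro T t
        obtain ⟨l, hl⟩ := this.1 T (fun i => t (σ i))
        refine ⟨l, fun j => ?_⟩
        obtain ⟨i, rfl⟩ := σ.surjective j
        exact hl i
      · intro T l l' hl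
        exact this.2 T l l' (fun i => hl _)
    · rw [isFP_iff] at hf ⊢
      constructor
      · intro T t
        have key : ∃ t' : ∀ j, T ⟶ A j, ∀ i, t' (σ i) = t i := by
          let t' : ∀ j, T ⟶ A j := fun j =>
            t (σ.symm j) ≫ eqToHom (by simp)
          refine ⟨t', fun i => ?_⟩
          have : ∀ (i' : I) (hi : i' = i), t i' ≫ eqToHom (by rw [hi]) = t i := by
            rintro _ rfl; simp
          exact this _ (by simp)
        obtain ⟨t', ht'⟩ := key
        obtain ⟨l, hl⟩ := hf.1 T t'
        exact ⟨l, fun i => (hl _).trans (ht' i)⟩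
      · intro T l l' hl
        refine hf.2 T l l' (fun j => ?_)
        obtain ⟨i, rfl⟩ := σ.surjective j
        exact hl i
  | h_empty =>
    intro A' Y e m A P f a b he hm hf hpo
    rw [isFP_iff] at hf ⊢
    have hem : Epi m := (proj_regEpi (gs_of_map hX e) hm).epi'
    obtain ⟨s, -⟩ := hf.1 Y (fun i => i.elim)
    have hs : s ≫ m = 𝟙 Y := by
      rw [← cancel_epi m, ← Category.assoc,
        hf.2 _ (m ≫ s) (𝟙 A') (fun i => i.elim)]
      simp
    constructor
    · intro T t
      obtain ⟨l, -⟩ := hf.1 T (fun i => i.elim)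
      exact ⟨l ≫ m, fun i => i.elim⟩
    · intro T l l' _
      rw [← Category.comp_id l, ← Category.comp_id l', ← hs, ← Category.assoc, ← Category.assoc,
        hf.2 _ (l ≫ s) (l' ≫ s) (fun i => i.elim)]
  | @h_option I _ ih =>
    intro A' Y e m A P f a b he hm hf hpo
    have hee : Epi e := (proj_regEpi hX he).epi'
    let A'' : C := ∏ᶜ (fun i : I => A (some i))
    let q : A' ⟶ A'' := Pi.lift (fun i => f (some i))
    have hqπ : ∀ i, q ≫ Pi.π (fun i : I => A (some i)) i = f (some i) := fun i => by simp [q]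
    have hbin : IsBinaryProduct (f none) q := by
      rw [isFP_iff] at hf
      rw [isBP_iff]
      constructor
      · intro T x y
        obtain ⟨l, hl⟩ := hf.1 T (fun i => match i with
          | none => x
          | some i => y ≫ Pi.π (fun i : I => A (some i)) i)
        refine ⟨l, hl none, ?_⟩
        refine Pi.hom_ext _ _ (fun i => ?_)
        rw [Category.assoc, hqπ]
        exact hl (some i)
      · intro T l l' h1 h2
        refine hf.2 T l l' (fun i => ?_)
        cases i with
        | none => exact h1
        | some i => rw [← hqπ, ← Category.assoc, h2, Category.assoc]
    have hq : IsProductProjection q := ⟨_, _, hbin.symm'⟩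
    have heq : IsProductProjection (e ≫ q) := isProductProjection_comp he hq
    have hem : IsProductProjection (e ≫ m) := isProductProjection_comp he hm
    obtain ⟨P'', a'', b'', hP'', ha'', hb''⟩ := h.pushout_exists (e ≫ m) (e ≫ q) hem heq
    have hP := (pushout_epi e).1 hP''
    have hY := bin_factor hX h he hbin hm (hpo none) hP
    have hcond : ∀ i : I, q ≫ Pi.π (fun i : I => A (some i)) i ≫ a (some i) = m ≫ b (some i) := by
      intro i
      rw [← Category.assoc, hqπ, (hpo (some i)).w]
    let c : ∀ i : I, P'' ⟶ P (some i) := fun i =>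
      hP.desc (Pi.π (fun i : I => A (some i)) i ≫ a (some i)) (b (some i)) (hcond i)
    have hbc : ∀ i, b'' ≫ c i = b (some i) := fun i => hP.inr_desc _ _ _
    have hac : ∀ i, a'' ≫ c i = Pi.π (fun i : I => A (some i)) i ≫ a (some i) :=
      fun i => hP.inl_desc _ _ _
    have hpc : ∀ i : I, IsPushout (Pi.π (fun i : I => A (some i)) i) a'' (a (some i)) (c i) := by
      intro i
      refine IsPushout.flip (IsPushout.of_top (h₁₁ := m) (v₁₁ := q) (v₁₂ := b'') ?_ (hac i) hP.flip)
      rw [hqπ, hbc]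
      exact (hpo (some i)).flip
    have hlim := ih A'' P'' (e ≫ q) a'' (fun i => A (some i)) (fun i => P (some i))
      (fun i => Pi.π (fun i : I => A (some i)) i) (fun i => a (some i)) c heq ha''
      ⟨productIsProduct _⟩ hpc
    rw [isBP_iff] at hY
    rw [isFP_iff] at hlim ⊢
    constructor
    · intro T t
      obtain ⟨l, hl⟩ := hlim.1 T (fun i => t (some i))
      obtain ⟨l', h1, h2⟩ := hY.1 T (t none) l
      refine ⟨l', fun i => ?_⟩
      cases i with
      | none => exact h1
      | some i => rw [← hbc, ← Category.assoc, h2, hl]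
    · intro T l l' hl
      refine hY.2 T l l' (hl none) (hlim.2 _ _ _ (fun i => ?_))
      rw [Category.assoc, Category.assoc, hbc, hl]

theorem fan_proj {I : Type} [Finite I] {X : C} {A : I → C} (f : ∀ i, X ⟶ A i)
    (hf : Nonempty (IsLimit (Fan.mk X f))) (i : I) : IsProductProjection (f i) := by
  classical
  refine ⟨∏ᶜ (fun j : {j : I // j ≠ i} => A j.1), Pi.lift (fun j => f j.1), ?_⟩
  rw [isFP_iff] at hf
  rw [isBP_iff]
  constructor
  · intro T x y
    obtain ⟨l, hl⟩ := hf.1 T (fun j => if hj : j = i then x ≫ eqToHom (by rw [hj]) else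
      y ≫ Pi.π (fun j : {j : I // j ≠ i} => A j.1) ⟨j, hj⟩)
    refine ⟨l, by simp [hl], ?_⟩
    refine Pi.hom_ext _ _ (fun j => ?_)
    rw [Category.assoc, Pi.lift_π, hl, dif_neg j.2]
  · intro T l l' h1 h2
    refine hf.2 T l l' (fun j => ?_)
    by_cases hj : j = i
    · subst hj; exact h1
    · have := congrArg (· ≫ Pi.π (fun j : {j : I // j ≠ i} => A j.1) ⟨j, hj⟩) h2
      simpa using this

theorem fsr_of_pc {X : C} (hX : HasGlobalSupport X) (h : ProjectionCoextensive X) :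
    HasFiniteStrictRefinement X := by
  intro I J _ _ A B f g hf hg
  have hfp := fan_proj f hf
  have hgp := fan_proj g hg
  choose D α β hD hα hβ using fun i j => h.pushout_exists (g j) (f i) (hgp j) (hfp i)
  refine ⟨D, α, β, fun i j => (hD i j).w, fun i => ?_, fun j => ?_⟩
  · exact nary hX h J X (A i) (𝟙 X) (f i) B (D i) g (β i) (α i) (isProductProjection_iso _)
      (hfp i) hg (fun j => (hD i j).flip)
  · exact nary hX h I X (B j) (𝟙 X) (g j) A (fun i => D i j) f (fun i => α i j) (fun i => β i j)
      (isProductProjection_iso _) (hgp j) hf (fun i => hD i j)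

end Helpers

/-- For an object with global support in a regular category which admits pushouts of
its product projections, the finite strict refinement property is equivalent to
projection-coextensivity. -/
theorem finiteStrictRefinement_iff_projectionCoextensive
    {C : Type u} [Category.{v} C] [HasFiniteLimits C] [IsRegularCategory C]
    (X : C) (hgs : HasGlobalSupport X)
    (hpush : ∀ ⦃A B : C⦄ (p : X ⟶ A) (q : X ⟶ B),
      IsProductProjection p → IsProductProjection q →
      ∃ (P : C) (a : A ⟶ P) (b : B ⟶ P), IsPushout p q a b) :
    HasFiniteStrictRefinement X ↔ ProjectionCoextensive X := by
  exact ⟨pc_of_fsr hgs, fsr_of_pc hgs⟩
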